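/- Let f : ℝⁿ → ℝ be differentiable with ∇f Lipschitz with constant L > 0, bounded below by f⋆, and satisfying the PL inequality (1/2)‖∇f(θ)‖² ≥ μ (f(θ) − f⋆) for all θ, with 0 < μ ≤ L. Let η > 0 and 0 < α ≤ η² / (L(L + η)). Suppose θ_{t+1} = θ_t − α (B_t + ηI)⁻¹ ∇f(θ_t) where each B_t is symmetric with 0 ⪯ B_t ⪯ L·I. Then for every T ≥ 0, f(θ_T) − f⋆ ≤ (1 − α μ / (L + η))^T (f(θ₀) − f⋆), and the contraction factor satisfies 0 < 1 − α μ / (L + η) < 1. -/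

import Mathlib

/-!
Write `g = ∇f(θ)` and `p = (B + ηI)⁻¹ g`. Since `0 ⪯ B ⪯ L·I`, the eigenvalues of `(B + ηI)⁻¹` lie
in `[1/(L+η), 1/η]`, so `⟪g, p⟫ ≥ ‖g‖²/(L+η)` and `‖p‖ ≤ ‖g‖/η` (`damped_bounds`). The descent lemma
for `L`-smooth functions (`descent_lemma`) gives
`f(θ - αp) ≤ f(θ) - α⟪g, p⟫ + (L/2)α²‖p‖² ≤ f(θ) - (α/(L+η) - Lα²/(2η²))‖g‖²`, and the step size
restriction `αL/η² ≤ 1/(L+η)` makes the right side at most `f(θ) - α/(2(L+η)) ‖g‖²`. The PL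
inequality turns this into a contraction of `f - f⋆` by the factor `1 - αμ/(L+η)`, which iterates.
-/

/-- Quadratic upper bound for a function with `L`-Lipschitz gradient, obtained by comparing
derivatives along the segment from `x` to `x + v`. -/
theorem descent_lemma {E : Type*} [NormedAddCommGroup E] [InnerProductSpace ℝ E] [CompleteSpace E]
    (f : E → ℝ) (L : ℝ) (hdiff : Differentiable ℝ f)
    (hlip : ∀ x y, ‖gradient f x - gradient f y‖ ≤ L * ‖x - y‖) (x v : E) :
    f (x + v) ≤ f x + inner ℝ (gradient f x) v + L / 2 * ‖v‖ ^ 2 := by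
  have hφ : ∀ s : ℝ, HasDerivAt (fun s : ℝ => f (x + s • v))
      (inner ℝ (gradient f (x + s • v)) v) s := by
    intro s
    have h1 : HasDerivAt (fun s : ℝ => x + s • v) v s := by
      simpa using ((hasDerivAt_id s).smul_const v).const_add x
    have h2 := (hdiff (x + s • v)).hasGradientAt.hasFDerivAt.comp_hasDerivAt s h1
    simpa [Function.comp_def] using h2
  have hψ : ∀ s : ℝ, HasDerivAt
      (fun s : ℝ => f x + s * inner ℝ (gradient f x) v + L / 2 * ‖v‖ ^ 2 * s ^ 2)
      (inner ℝ (gradient f x) v + L * ‖v‖ ^ 2 * s) s := by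
    intro s
    have h1 := ((hasDerivAt_id' s).mul_const (inner ℝ (gradient f x) v)).const_add (f x)
    have h2 := (hasDerivAt_pow 2 s).const_mul (L / 2 * ‖v‖ ^ 2)
    refine (h1.add h2).congr_deriv ?_
    push_cast
    ring
  have key := image_le_of_deriv_right_le_deriv_boundary (a := 0) (b := 1)
    (fun s _ => (hφ s).continuousAt.continuousWithinAt)
    (fun s _ => (hφ s).hasDerivWithinAt) (by simp)
    (fun s _ => (hψ s).continuousAt.continuousWithinAt)
    (fun s _ => (hψ s).hasDerivWithinAt)
    (by
      intro s hs
      have h1 : inner ℝ (gradient f (x + s • v) - gradient f x) v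
          ≤ ‖gradient f (x + s • v) - gradient f x‖ * ‖v‖ := real_inner_le_norm _ _
      have h2 := hlip (x + s • v) x
      rw [add_sub_cancel_left, norm_smul, Real.norm_of_nonneg hs.1] at h2
      have h3 := mul_le_mul_of_nonneg_right h2 (norm_nonneg v)
      rw [inner_sub_left] at h1
      nlinarith) (Set.right_mem_Icc.2 zero_le_one)
  simpa using key

theorem inner_toEuclideanCLM_nonneg {n : ℕ} {A : Matrix (Fin n) (Fin n) ℝ} (hA : A.PosSemidef)
    (x : EuclideanSpace ℝ (Fin n)) : 0 ≤ inner ℝ (Matrix.toEuclideanCLM (𝕜 := ℝ) A x) x := by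
  have h := hA.dotProduct_mulVec_nonneg x.ofLp
  rw [EuclideanSpace.inner_eq_star_dotProduct]
  simpa using h

theorem inner_toEuclideanCLM_symm {n : ℕ} {A : Matrix (Fin n) (Fin n) ℝ} (hA : A.IsHermitian)
    (x y : EuclideanSpace ℝ (Fin n)) :
    inner ℝ (Matrix.toEuclideanCLM (𝕜 := ℝ) A x) y
      = inner ℝ x (Matrix.toEuclideanCLM (𝕜 := ℝ) A y) := by
  have h : star A = A := hA
  conv_rhs => rw [← ContinuousLinearMap.adjoint_inner_left, ← ContinuousLinearMap.star_eq_adjoint,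
    ← map_star, h]

/-- The consequences of `I/(L+η) ⪯ (B + ηI)⁻¹ ⪯ I/η` for `p = (B + ηI)⁻¹ g`, stated without division. -/
theorem damped_bounds {n : ℕ} {B : Matrix (Fin n) (Fin n) ℝ} {L η : ℝ} (hL : 0 < L) (hη : 0 < η)
    (hB : B.PosSemidef) (hBL : (L • (1 : Matrix (Fin n) (Fin n) ℝ) - B).PosSemidef)
    (g p : EuclideanSpace ℝ (Fin n))
    (hp : p = Matrix.toEuclideanCLM (𝕜 := ℝ) ((B + η • (1 : Matrix (Fin n) (Fin n) ℝ))⁻¹) g) :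
    ‖g‖ ^ 2 ≤ (L + η) * inner ℝ g p ∧ η * ‖p‖ ≤ ‖g‖ := by
  have hM : (B + η • (1 : Matrix (Fin n) (Fin n) ℝ)).PosDef :=
    Matrix.PosDef.posSemidef_add hB (Matrix.PosDef.one.smul hη)
  set A := Matrix.toEuclideanCLM (n := Fin n) (𝕜 := ℝ) B with hA
  have hg : g = A p + η • p := by
    have h1 : Matrix.toEuclideanCLM (n := Fin n) (𝕜 := ℝ)
        (B + η • (1 : Matrix (Fin n) (Fin n) ℝ)) p = g := by
      rw [hp, ← mul_apply_eq_comp, ← map_mul,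
        Matrix.mul_nonsing_inv _ ((Matrix.isUnit_iff_isUnit_det _).1 hM.isUnit)]
      simp
    rw [← h1]
    simp [hA]
  have hpos : ∀ x, 0 ≤ inner ℝ (A x) x := inner_toEuclideanCLM_nonneg hB
  have hle : ∀ x, inner ℝ (A x) x ≤ L * ‖x‖ ^ 2 := by
    intro x
    have h := inner_toEuclideanCLM_nonneg hBL x
    simp only [map_sub, map_smul, map_one, sub_apply,
      smul_apply, one_apply_eq_self, inner_sub_left,
      real_inner_smul_left, real_inner_self_eq_norm_sq] at h
    linarith
  have hsymm : ∀ x y, inner ℝ (A x) y = inner ℝ x (A y) := inner_toEuclideanCLM_symm hB.1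
  -- `B² ⪯ L·B`: add the positivity of `B` at `Lp - Bp` to the bound `B ⪯ L·I` at `Bp`.
  have hsq : ‖A p‖ ^ 2 ≤ L * inner ℝ (A p) p := by
    have h1 := hpos (L • p - A p)
    have h2 := hle (A p)
    have h3 : inner ℝ (A (A p)) p = ‖A p‖ ^ 2 := by rw [hsymm, real_inner_self_eq_norm_sq]
    simp only [map_sub, map_smul, inner_sub_left, inner_sub_right, real_inner_smul_left,
      real_inner_smul_right, real_inner_self_eq_norm_sq, h3] at h1
    have h4 : 0 ≤ L * (L * inner ℝ (A p) p - ‖A p‖ ^ 2) := by linarith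
    linarith [nonneg_of_mul_nonneg_right h4 hL]
  have hgp : inner ℝ g p = inner ℝ (A p) p + η * ‖p‖ ^ 2 := by
    rw [hg, inner_add_left, real_inner_smul_left, real_inner_self_eq_norm_sq]
  have hgg : ‖g‖ ^ 2 = ‖A p‖ ^ 2 + 2 * (η * inner ℝ (A p) p) + η ^ 2 * ‖p‖ ^ 2 := by
    rw [hg, norm_add_sq_real, real_inner_smul_right, norm_smul, mul_pow, Real.norm_eq_abs, sq_abs]
  constructor
  · rw [hgg, hgp]
    nlinarith [mul_le_mul_of_nonneg_left (hle p) hη.le]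
  · refine (pow_le_pow_iff_left₀ (by positivity) (norm_nonneg g) two_ne_zero).1 ?_
    rw [hgg, mul_pow]
    nlinarith [sq_nonneg ‖A p‖, mul_nonneg hη.le (hpos p)]

/-- **Theorem 1 (PL contraction), deterministic iterated form for CAO.**
Let `f` have `L`-Lipschitz gradient (`L > 0`), be bounded below by `f⋆`, and satisfy the PL
inequality with `0 < μ ≤ L`.  Let `η > 0`, `0 < α ≤ η²/(L(L+η))`, and let the CAO iterates
satisfy `θ_{t+1} = θ_t − α (B_t + η I)⁻¹ ∇f(θ_t)` with symmetric sketches `0 ⪯ B_t ⪯ L·I`.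
Then `f(θ_T) − f⋆ ≤ (1 − α μ/(L+η))^T (f(θ₀) − f⋆)` for every `T`, and the contraction
factor satisfies `0 < 1 − α μ/(L+η) < 1`. -/
theorem cao_pl_contraction
    (n : ℕ) (f : EuclideanSpace ℝ (Fin n) → ℝ) (L : ℝ) (hL : 0 < L)
    (hdiff : Differentiable ℝ f)
    (hlip : ∀ x y, ‖gradient f x - gradient f y‖ ≤ L * ‖x - y‖)
    (fstar : ℝ) (hbdd : ∀ θ', fstar ≤ f θ')
    (μ : ℝ) (hμ : 0 < μ) (hμL : μ ≤ L)
    (hPL : ∀ θ', (1 / 2) * ‖gradient f θ'‖ ^ 2 ≥ μ * (f θ' - fstar))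
    (η : ℝ) (hη : 0 < η)
    (α : ℝ) (hα : 0 < α) (hαle : α ≤ η ^ 2 / (L * (L + η)))
    (B : ℕ → Matrix (Fin n) (Fin n) ℝ)
    (hBpsd : ∀ t, (B t).PosSemidef)
    (hBL : ∀ t, (L • (1 : Matrix (Fin n) (Fin n) ℝ) - B t).PosSemidef)
    (θ : ℕ → EuclideanSpace ℝ (Fin n))
    (hupd : ∀ t, θ (t + 1) = θ t - α • Matrix.toEuclideanCLM (𝕜 := ℝ)
        ((B t + η • (1 : Matrix (Fin n) (Fin n) ℝ))⁻¹) (gradient f (θ t))) :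
    (∀ T : ℕ, f (θ T) - fstar ≤ (1 - α * μ / (L + η)) ^ T * (f (θ 0) - fstar)) ∧
    0 < 1 - α * μ / (L + η) ∧ 1 - α * μ / (L + η) < 1 := by
  have hLη : 0 < L + η := by linarith
  have hstep : α * (L * (L + η)) ≤ η ^ 2 := (le_div_iff₀ (by positivity)).1 hαle
  have hrate : 0 < α * μ / (L + η) := by positivity
  have hrate1 : α * μ / (L + η) < 1 := by
    rw [div_lt_one hLη]
    -- `αμ(L+η) ≤ αL(L+η) ≤ η² < (L+η)²`.
    have h1 : α * μ * (L + η) ≤ η ^ 2 := by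
      have h := mul_le_mul_of_nonneg_left hμL (mul_pos hα hLη).le
      linarith
    nlinarith
  refine ⟨fun T => ?_, by linarith, by linarith⟩
  induction T with
  | zero => simp
  | succ t ih =>
    set g := gradient f (θ t) with hg
    obtain ⟨p, hp⟩ : ∃ p, p = Matrix.toEuclideanCLM (𝕜 := ℝ)
        ((B t + η • (1 : Matrix (Fin n) (Fin n) ℝ))⁻¹) g := ⟨_, rfl⟩
    obtain ⟨h1, h2⟩ := damped_bounds hL hη (hBpsd t) (hBL t) g p hp
    have hdesc := descent_lemma f L hdiff hlip (θ t) (-(α • p))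
    rw [← sub_eq_add_neg, hp, ← hupd t, ← hp, ← hg, inner_neg_right, real_inner_smul_right,
      norm_neg, norm_smul, Real.norm_of_nonneg hα.le] at hdesc
    have h3 : (η * ‖p‖) ^ 2 ≤ ‖g‖ ^ 2 := pow_le_pow_left₀ (by positivity) h2 2
    have h4 : L * α * ‖p‖ ^ 2 ≤ ‖g‖ ^ 2 / (L + η) := by
      rw [le_div_iff₀ hLη]
      have h := mul_le_mul_of_nonneg_right hstep (sq_nonneg ‖p‖)
      linarith
    have h5 : ‖g‖ ^ 2 / (L + η) ≤ inner ℝ g p := by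
      rw [div_le_iff₀ hLη]
      linarith
    have h6 : f (θ (t + 1)) ≤ f (θ t) - α / 2 * (‖g‖ ^ 2 / (L + η)) := by
      have h7 := mul_le_mul_of_nonneg_left h4 hα.le
      have h8 := mul_le_mul_of_nonneg_left h5 hα.le
      linarith
    have h9 : α * μ / (L + η) * (f (θ t) - fstar) ≤ α / 2 * (‖g‖ ^ 2 / (L + η)) := by
      have h := mul_le_mul_of_nonneg_left (hPL (θ t)) (div_pos hα hLη).le
      rw [← hg] at h
      calc _ = α / (L + η) * (μ * (f (θ t) - fstar)) := by ring
        _ ≤ _ := h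
        _ = _ := by ring
    calc f (θ (t + 1)) - fstar ≤ (1 - α * μ / (L + η)) * (f (θ t) - fstar) := by linarith
      _ ≤ (1 - α * μ / (L + η)) * ((1 - α * μ / (L + η)) ^ t * (f (θ 0) - fstar)) :=
        mul_le_mul_of_nonneg_left ih (by linarith)
      _ = _ := by ring
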